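/- Let (X,d) be a nonempty compact metric space, P(X) its space of Borel probability measures with the Kantorovich metric, and Fix(P(X)) the set of measures invariant under all pushforwards by surjective isometries of X. Then the map Ψ: Fix(P(X)) → P(X^{(1)}), μ ↦ μ ∘ π^{-1} (pushforward under the orbit projection π: X → X^{(1)}), is an affine isometry of Fix(P(X)) onto P(X^{(1)}), where P(X^{(1)}) carries the Kantorovich metric of d^{(1)}. In particular δ(Fix(P(X))) = δ(X^{(1)}). -/

import Mathlib

open MeasureTheory
open scoped NNReal

/-- The Kantorovich distance between two Borel measures. -/
noncomputable def kantorovichDist {X : Type*} [MetricSpace X] [MeasurableSpace X]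
    (μ ν : Measure X) : ℝ :=
  sSup {r : ℝ | ∃ f : X → ℝ, LipschitzWith 1 f ∧
    r = |(∫ x, f x ∂μ) - ∫ x, f x ∂ν|}

/-- The greatest quotient metric d⁽¹⁾ on the orbit space X⁽¹⁾, on representatives. -/
noncomputable def orbitDist {X : Type*} [MetricSpace X] (x y : X) : ℝ :=
  sSup {r : ℝ | ∃ f : X → ℝ, LipschitzWith 1 f ∧
    (∀ (Φ : X ≃ᵢ X) (a : X), f (Φ a) = f a) ∧ r = |f x - f y|}

section IsoGroup

variable {X : Type*} [MetricSpace X]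

/-- The topology of pointwise convergence (of the map and its inverse) on isometries. -/
instance isoTopology : TopologicalSpace (X ≃ᵢ X) :=
  TopologicalSpace.induced (fun Φ => ((Φ : X → X), (Φ.symm : X → X))) inferInstance

lemma iso_isInducing : Topology.IsInducing
    (fun Φ : X ≃ᵢ X => ((Φ : X → X), (Φ.symm : X → X))) := ⟨rfl⟩

lemma iso_isEmbedding : Topology.IsEmbedding
    (fun Φ : X ≃ᵢ X => ((Φ : X → X), (Φ.symm : X → X))) := by
  refine ⟨iso_isInducing, ?_⟩
  intro Φ Ψ h
  ext x
  exact congrFun (Prod.ext_iff.1 h).1 x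

instance isoT2 : T2Space (X ≃ᵢ X) := iso_isEmbedding.t2Space

lemma iso_continuous_apply (x : X) : Continuous (fun Φ : X ≃ᵢ X => Φ x) :=
  (continuous_apply x).comp (continuous_fst.comp iso_isInducing.continuous)

lemma iso_continuous_symm_apply (x : X) : Continuous (fun Φ : X ≃ᵢ X => Φ.symm x) :=
  (continuous_apply x).comp (continuous_snd.comp iso_isInducing.continuous)

lemma iso_continuous_eval : Continuous (fun p : (X ≃ᵢ X) × X => p.1 p.2) := by
  rw [continuous_iff_continuousAt]
  rintro ⟨Φ, x⟩
  rw [ContinuousAt, tendsto_iff_dist_tendsto_zero]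
  have h : Filter.Tendsto (fun p : (X ≃ᵢ X) × X => dist p.2 x + dist (p.1 x) (Φ x))
      (nhds (Φ, x)) (nhds 0) := by
    have hc : Continuous (fun p : (X ≃ᵢ X) × X => dist p.2 x + dist (p.1 x) (Φ x)) :=
      (continuous_snd.dist continuous_const).add
        (((iso_continuous_apply x).comp continuous_fst).dist continuous_const)
    simpa using hc.tendsto (Φ, x)
  refine squeeze_zero (fun _ => dist_nonneg) (fun p => ?_) h
  calc dist (p.1 p.2) (Φ x) ≤ dist (p.1 p.2) (p.1 x) + dist (p.1 x) (Φ x) := dist_triangle _ _ _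
    _ = _ := by rw [p.1.dist_eq]

lemma iso_continuous_inv : Continuous (fun Φ : X ≃ᵢ X => Φ⁻¹) := by
  rw [iso_isInducing.continuous_iff]
  refine Continuous.prodMk ?_ ?_
  · exact continuous_pi fun x => iso_continuous_symm_apply x
  · exact continuous_pi fun x => iso_continuous_apply x

instance isoTopGroup : IsTopologicalGroup (X ≃ᵢ X) where
  continuous_inv := iso_continuous_inv
  continuous_mul := by
    rw [iso_isInducing.continuous_iff]
    refine Continuous.prodMk ?_ ?_
    · refine continuous_pi fun x => ?_
      exact iso_continuous_eval.comp
        (continuous_fst.prodMk ((iso_continuous_apply x).comp continuous_snd))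
    · refine continuous_pi fun x => ?_
      exact iso_continuous_eval.comp
        ((iso_continuous_inv.comp continuous_snd).prodMk
          ((iso_continuous_symm_apply x).comp continuous_fst))

instance isoCompact [CompactSpace X] : CompactSpace (X ≃ᵢ X) := by
  refine Topology.IsClosedEmbedding.compactSpace
    (f := (fun Φ : X ≃ᵢ X => ((Φ : X → X), (Φ.symm : X → X)))) ⟨iso_isEmbedding, ?_⟩
  have : Set.range (fun Φ : X ≃ᵢ X => ((Φ : X → X), (Φ.symm : X → X)))
      = {p : (X → X) × (X → X) | ∀ x y, dist (p.1 x) y = dist x (p.2 y)} := by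
    ext ⟨f, g⟩
    constructor
    · rintro ⟨Φ, h⟩ x y
      rw [← h]
      change dist (Φ x) y = dist x (Φ.symm y)
      rw [← Φ.dist_eq x, Φ.apply_symm_apply]
    · intro h
      have h' : ∀ x y, dist (f x) y = dist x (g y) := h
      have hfg : ∀ y, f (g y) = y := fun y => by
        rw [← dist_eq_zero, h', dist_self]
      have hgf : ∀ x, g (f x) = x := fun x => by
        rw [eq_comm, ← dist_eq_zero, ← h', dist_self]
      refine ⟨⟨⟨f, g, hgf, hfg⟩, Isometry.of_dist_eq fun x y => ?_⟩, rfl⟩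
      change dist (f x) (f y) = _
      rw [h', hgf]
  rw [this]
  simp only [Set.setOf_forall]
  refine isClosed_iInter fun x => isClosed_iInter fun y => isClosed_eq ?_ ?_
  · exact ((continuous_apply x).comp continuous_fst).dist continuous_const
  · exact continuous_const.dist ((continuous_apply y).comp continuous_snd)

/-- The averaging operator over the isometry group. -/
lemma exists_average [CompactSpace X] [MeasurableSpace X] [BorelSpace X] :
    ∃ A : C(X, ℝ) →ₗ[ℝ] C(X, ℝ),
      (∀ f, (∀ x, 0 ≤ f x) → ∀ x, 0 ≤ A f x) ∧
      (∀ f (Φ : X ≃ᵢ X) x, A f (Φ x) = A f x) ∧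
      (∀ (f g : C(X, ℝ)) (Φ : X ≃ᵢ X), (∀ x, g x = f (Φ x)) → A g = A f) ∧
      (∀ f, (∀ (Φ : X ≃ᵢ X) x, f (Φ x) = f x) → A f = f) ∧
      (∀ f : C(X, ℝ), LipschitzWith 1 f → LipschitzWith 1 (A f)) ∧
      (∀ (f : C(X, ℝ)) (μ : Measure X), IsProbabilityMeasure μ →
        (∀ Φ : X ≃ᵢ X, μ.map Φ = μ) → ∫ x, A f x ∂μ = ∫ x, f x ∂μ) := by
  letI : MeasurableSpace (X ≃ᵢ X) := borel _
  haveI : BorelSpace (X ≃ᵢ X) := ⟨rfl⟩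
  let m : Measure (X ≃ᵢ X) := Measure.haarMeasure ⊤
  haveI hm : IsProbabilityMeasure m := ⟨Measure.haarMeasure_self (K₀ := ⊤)⟩
  haveI : m.IsMulRightInvariant := ⟨fun g => by
    haveI : IsProbabilityMeasure (m.map (· * g)) :=
      Measure.isProbabilityMeasure_map (measurable_mul_const g).aemeasurable
    exact Measure.isHaarMeasure_eq_of_isProbabilityMeasure _ _⟩
  have hc : ∀ (f : C(X, ℝ)) (x : X), Continuous (fun Φ : X ≃ᵢ X => f (Φ x)) :=
    fun f x => f.continuous.comp (iso_continuous_apply x)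
  have hi : ∀ (f : C(X, ℝ)) (x : X), Integrable (fun Φ : X ≃ᵢ X => f (Φ x)) m :=
    fun f x => (hc f x).integrable_of_hasCompactSupport (HasCompactSupport.of_compactSpace _)
  have hA : ∀ f : C(X, ℝ), Continuous (fun x => ∫ Φ : X ≃ᵢ X, f (Φ x) ∂m) := by
    intro f
    refine continuous_of_dominated (bound := fun _ => ‖f‖) (fun x => (hi f x).1)
      (fun x => Filter.Eventually.of_forall fun Φ => f.norm_coe_le_norm _) (integrable_const _)
      (Filter.Eventually.of_forall fun Φ => f.continuous.comp Φ.continuous)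
  refine ⟨⟨⟨fun f => ⟨_, hA f⟩, ?_⟩, ?_⟩, ?_, ?_, ?_, ?_, ?_, ?_⟩
  · intro f g
    ext x
    exact integral_add (hi f x) (hi g x)
  · intro c f
    ext x
    exact integral_const_mul c _
  · intro f hf x
    exact integral_nonneg fun Φ => hf _
  · intro f Ψ x
    exact integral_mul_right_eq_self (μ := m) (fun Φ : X ≃ᵢ X => f (Φ x)) Ψ
  · intro f g Ψ h
    ext x
    change ∫ Φ : X ≃ᵢ X, g (Φ x) ∂m = ∫ Φ : X ≃ᵢ X, f (Φ x) ∂m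
    simp_rw [h]
    exact integral_mul_left_eq_self (μ := m) (fun Φ : X ≃ᵢ X => f (Φ x)) Ψ
  · intro f h
    ext x
    change ∫ Φ : X ≃ᵢ X, f (Φ x) ∂m = f x
    simp [h]
  · intro f hf
    refine LipschitzWith.of_dist_le_mul fun x y => ?_
    change dist (∫ Φ : X ≃ᵢ X, f (Φ x) ∂m) (∫ Φ : X ≃ᵢ X, f (Φ y) ∂m) ≤ _
    rw [dist_eq_norm, ← integral_sub (hi f x) (hi f y)]
    have := norm_integral_le_of_norm_le_const (μ := m) (C := dist x y)
      (f := fun Φ : X ≃ᵢ X => f (Φ x) - f (Φ y))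
      (Filter.Eventually.of_forall fun Φ => by
        have := hf.dist_le_mul (Φ x) (Φ y)
        rw [Φ.dist_eq, dist_eq_norm] at this
        simpa using this)
    simpa using this
  · intro f μ hμ hinv
    change ∫ x, ∫ Φ : X ≃ᵢ X, f (Φ x) ∂m ∂μ = _
    rw [integral_integral_swap_of_hasCompactSupport (f := fun x (Φ : X ≃ᵢ X) => f (Φ x))
      (f.continuous.comp (iso_continuous_eval.comp (continuous_snd.prodMk continuous_fst)))
      (HasCompactSupport.of_compactSpace _)]
    have : ∀ Φ : X ≃ᵢ X, ∫ x, f (Φ x) ∂μ = ∫ x, f x ∂μ := by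
      intro Φ
      conv_rhs => rw [← hinv Φ]
      rw [integral_map Φ.continuous.measurable.aemeasurable
        f.continuous.aestronglyMeasurable]
    simp [this]

end IsoGroup

lemma integral_diff_le_diam {Q : Type*} [MetricSpace Q] [CompactSpace Q] [Nonempty Q]
    [MeasurableSpace Q] [BorelSpace Q] (μ ν : Measure Q) [IsProbabilityMeasure μ]
    [IsProbabilityMeasure ν] (f : Q → ℝ) (hf : LipschitzWith 1 f) :
    |(∫ x, f x ∂μ) - ∫ x, f x ∂ν| ≤ Metric.diam (Set.univ : Set Q) := by
  obtain ⟨q, -, hq⟩ := isCompact_univ.exists_isMinOn Set.univ_nonempty hf.continuous.continuousOn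
  have hmin : ∀ x, f q ≤ f x := fun x => hq (Set.mem_univ x)
  have hmax : ∀ x, f x ≤ f q + Metric.diam (Set.univ : Set Q) := fun x => by
    have h1 := hf.dist_le_mul x q
    have h2 := Metric.dist_le_diam_of_mem (isCompact_univ (X := Q)).isBounded
      (Set.mem_univ x) (Set.mem_univ q)
    rw [Real.dist_eq] at h1
    have h3 := le_abs_self (f x - f q)
    simp at h1
    linarith
  have key : ∀ ρ : Measure Q, IsProbabilityMeasure ρ →
      f q ≤ ∫ x, f x ∂ρ ∧ ∫ x, f x ∂ρ ≤ f q + Metric.diam (Set.univ : Set Q) := by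
    intro ρ hρ
    have hi : Integrable f ρ :=
      hf.continuous.integrable_of_hasCompactSupport (HasCompactSupport.of_compactSpace _)
    constructor
    · simpa using integral_mono (integrable_const (f q)) hi hmin
    · simpa using integral_mono hi (integrable_const (μ := ρ) _) hmax
  have h1 := key μ inferInstance
  have h2 := key ν inferInstance
  rw [abs_le]
  constructor <;> linarith [h1.1, h1.2, h2.1, h2.2]

open scoped CompactlySupported BoundedContinuousFunction

/-- Let X be a nonempty compact metric space and let (Q, π) realize the
orbit space X⁽¹⁾ with its greatest quotient metric d⁽¹⁾ (π is the orbit projection).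
Then μ ↦ μ ∘ π⁻¹ is an affine isometry of Fix(P(X)) — the set of probability measures
invariant under all surjective isometries of X — onto P(Q), both equipped with the
Kantorovich metric. In particular δ(Fix(P(X))) = δ(X⁽¹⁾). -/
theorem fix_pushforward_affine_isometry_onto {X Q : Type*}
    [MetricSpace X] [CompactSpace X] [Nonempty X] [MeasurableSpace X] [BorelSpace X]
    [MetricSpace Q] [MeasurableSpace Q] [BorelSpace Q]
    (π : X → Q) (hsurj : Function.Surjective π) (hcont : Continuous π)
    (hdist : ∀ x y : X, dist (π x) (π y) = orbitDist x y)
    (hfib : ∀ x y : X, π x = π y ↔ ∃ Φ : X ≃ᵢ X, Φ x = y) :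
    (∀ μ ν : Measure X, IsProbabilityMeasure μ → IsProbabilityMeasure ν →
        (∀ Φ : X ≃ᵢ X, μ.map Φ = μ) → (∀ Φ : X ≃ᵢ X, ν.map Φ = ν) →
        kantorovichDist (μ.map π) (ν.map π) = kantorovichDist μ ν) ∧
    (∀ ρ : Measure Q, IsProbabilityMeasure ρ →
        ∃! μ : Measure X, (IsProbabilityMeasure μ ∧ ∀ Φ : X ≃ᵢ X, μ.map Φ = μ) ∧
          μ.map π = ρ) ∧
    (∀ (μ ν : Measure X) (t : ℝ≥0),
        (t • μ + (1 - t) • ν).map π = t • μ.map π + (1 - t) • ν.map π) ∧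
    sSup {r : ℝ | ∃ μ ν : Measure X, IsProbabilityMeasure μ ∧ IsProbabilityMeasure ν ∧
        (∀ Φ : X ≃ᵢ X, μ.map Φ = μ) ∧ (∀ Φ : X ≃ᵢ X, ν.map Φ = ν) ∧
        r = kantorovichDist μ ν}
      = Metric.diam (Set.univ : Set Q) := by

  haveI : CompactSpace Q := hsurj.compactSpace hcont
  haveI : Nonempty Q := Nonempty.map π inferInstance
  have hquot : Topology.IsQuotientMap π := hcont.isClosedMap.isQuotientMap hcont hsurj
  have hm : Measurable π := hcont.measurable
  obtain ⟨A, hpos, hAinv, hAcomp, hAfix, hALip, hAint⟩ := exists_average (X := X)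
  have hπinv : ∀ (Φ : X ≃ᵢ X) x, π (Φ x) = π x := fun Φ x => ((hfib x (Φ x)).2 ⟨Φ, rfl⟩).symm
  have hπdist : ∀ x y, dist (π x) (π y) ≤ dist x y := by
    intro x y
    rw [hdist]
    refine Real.sSup_le ?_ dist_nonneg
    rintro r ⟨f, hf, -, rfl⟩
    simpa [Real.dist_eq] using hf.dist_le_mul x y
  -- descent of invariant functions
  have hdesc : ∀ f : C(X, ℝ), (∀ (Φ : X ≃ᵢ X) x, f (Φ x) = f x) →
      ∃ g : C(Q, ℝ), ∀ x, g (π x) = f x := by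
    intro f hf
    have h1 : ∀ x, f (Function.surjInv hsurj (π x)) = f x := by
      intro x
      obtain ⟨Φ, hΦ⟩ := (hfib x (Function.surjInv hsurj (π x))).1
        (Function.surjInv_eq hsurj (π x)).symm
      rw [← hΦ, hf]
    refine ⟨⟨fun q => f (Function.surjInv hsurj q), ?_⟩, h1⟩
    rw [hquot.continuous_iff]
    exact f.continuous.congr fun x => (h1 x).symm
  have hdescLip : ∀ (f : C(X, ℝ)) (g : C(Q, ℝ)), (∀ (Φ : X ≃ᵢ X) x, f (Φ x) = f x) →
      (∀ x, g (π x) = f x) → LipschitzWith 1 f → LipschitzWith 1 g := by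
    intro f g hf hg hL
    refine LipschitzWith.of_dist_le_mul fun p q => ?_
    obtain ⟨x, rfl⟩ := hsurj p
    obtain ⟨y, rfl⟩ := hsurj q
    rw [hdist, hg, hg, NNReal.coe_one, one_mul]
    refine le_csSup ⟨dist x y, ?_⟩ ⟨f, hL, hf, rfl⟩
    rintro r ⟨f, hf, -, rfl⟩
    simpa [Real.dist_eq] using hf.dist_le_mul x y
  have hmap : ∀ (g : C(Q, ℝ)) (μ : Measure X), ∫ q, g q ∂(μ.map π) = ∫ x, g (π x) ∂μ :=
    fun g μ => integral_map hm.aemeasurable g.continuous.aestronglyMeasurable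
  choose D hD using fun f : C(X, ℝ) => hdesc (A f) (hAinv f)
  have hDint : ∀ (f : C(X, ℝ)) (μ : Measure X), IsProbabilityMeasure μ →
      (∀ Φ : X ≃ᵢ X, μ.map Φ = μ) → ∫ q, D f q ∂(μ.map π) = ∫ x, f x ∂μ := by
    intro f μ hμ hinv
    rw [hmap]
    simp_rw [hD]
    exact hAint f μ hμ hinv
  have hiso : ∀ μ ν : Measure X, IsProbabilityMeasure μ → IsProbabilityMeasure ν →
        (∀ Φ : X ≃ᵢ X, μ.map Φ = μ) → (∀ Φ : X ≃ᵢ X, ν.map Φ = ν) →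
        kantorovichDist (μ.map π) (ν.map π) = kantorovichDist μ ν := by
    intro μ ν hμ hν hμi hνi
    unfold kantorovichDist
    congr 1
    ext r
    constructor
    · rintro ⟨g, hg, rfl⟩
      refine ⟨g ∘ π, ?_, ?_⟩
      · refine LipschitzWith.of_dist_le_mul fun x y => ?_
        refine (hg.dist_le_mul _ _).trans ?_
        simpa using hπdist x y
      · have h := hmap ⟨g, hg.continuous⟩
        simp only [ContinuousMap.coe_mk] at h
        rw [h, h]
        rfl
    · rintro ⟨f, hf, rfl⟩
      let F : C(X, ℝ) := ⟨f, hf.continuous⟩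
      refine ⟨D F, hdescLip (A F) (D F) (hAinv F) (hD F) (hALip F hf), ?_⟩
      rw [hDint F μ hμ hμi, hDint F ν hν hνi]
      rfl
  have hlift : ∀ ρ : Measure Q, IsProbabilityMeasure ρ →
        ∃ μ : Measure X, (IsProbabilityMeasure μ ∧ ∀ Φ : X ≃ᵢ X, μ.map Φ = μ) ∧
          μ.map π = ρ := by
    intro ρ hρ
    have hDi : ∀ f, Integrable (D f) ρ := fun f =>
      (D f).continuous.integrable_of_hasCompactSupport (HasCompactSupport.of_compactSpace _)
    let L : C_c(X, ℝ) →ₗ[ℝ] ℝ :=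
      { toFun := fun f => ∫ q, D f.toContinuousMap q ∂ρ
        map_add' := by
          intro f g
          rw [← integral_add (hDi _) (hDi _)]
          congr 1
          ext q
          obtain ⟨x, rfl⟩ := hsurj q
          have : (f + g).toContinuousMap = f.toContinuousMap + g.toContinuousMap := rfl
          rw [hD, hD, hD, this, map_add]
          rfl
        map_smul' := by
          intro c f
          rw [RingHom.id_apply, smul_eq_mul, ← integral_const_mul]
          congr 1
          ext q
          obtain ⟨x, rfl⟩ := hsurj q
          have : (c • f).toContinuousMap = c • f.toContinuousMap := rfl
          rw [hD, hD, this, map_smul]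
          rfl }
    let Λ : C_c(X, ℝ) →ₚ[ℝ] ℝ := PositiveLinearMap.mk₀ L (by
      intro f hf
      refine integral_nonneg fun q => ?_
      obtain ⟨x, rfl⟩ := hsurj q
      rw [hD]
      exact hpos _ (fun x => hf x) x)
    let μ := RealRMK.rieszMeasure Λ
    have hμ : ∀ f : C(X, ℝ), ∫ x, f x ∂μ = ∫ q, D f q ∂ρ := fun f =>
      RealRMK.integral_rieszMeasure Λ ⟨f, HasCompactSupport.of_compactSpace _⟩
    haveI : IsFiniteMeasure μ := ⟨isCompact_univ.measure_lt_top⟩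
    have hDπ : ∀ (g : C(Q, ℝ)), D (g.comp ⟨π, hcont⟩) = g := by
      intro g
      ext q
      obtain ⟨x, rfl⟩ := hsurj q
      rw [hD, hAfix]
      · rfl
      · intro Φ x
        change g (π _) = g (π _)
        rw [hπinv]
    have hpush : μ.map π = ρ := by
      refine ext_of_forall_integral_eq_of_IsFiniteMeasure fun g => ?_
      have h1 := hmap g.toContinuousMap μ
      have h2 := hμ (g.toContinuousMap.comp ⟨π, hcont⟩)
      rw [hDπ] at h2
      exact h1.trans h2
    refine ⟨μ, ⟨⟨?_⟩, ?_⟩, hpush⟩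
    · have : (μ.map π) Set.univ = 1 := by rw [hpush]; exact measure_univ
      rwa [Measure.map_apply hm MeasurableSet.univ, Set.preimage_univ] at this
    · intro Φ
      refine ext_of_forall_integral_eq_of_IsFiniteMeasure fun f => ?_
      rw [integral_map Φ.continuous.measurable.aemeasurable f.continuous.aestronglyMeasurable]
      have h1 := hμ f.toContinuousMap
      have h2 := hμ (f.toContinuousMap.comp ⟨Φ, Φ.continuous⟩)
      have h3 : D (f.toContinuousMap.comp ⟨Φ, Φ.continuous⟩) = D f.toContinuousMap := by
        ext q
        obtain ⟨x, rfl⟩ := hsurj q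
        rw [hD, hD, hAcomp f.toContinuousMap _ Φ (fun x => rfl)]
      rw [h3] at h2
      exact h2.trans h1.symm
  have hbound : ∀ μ ν : Measure Q, IsProbabilityMeasure μ → IsProbabilityMeasure ν →
      kantorovichDist μ ν ≤ Metric.diam (Set.univ : Set Q) := by
    intro μ ν hμ hν
    refine Real.sSup_le ?_ Metric.diam_nonneg
    rintro r ⟨f, hf, rfl⟩
    exact integral_diff_le_diam μ ν f hf
  have hprob : ∀ μ : Measure X, IsProbabilityMeasure μ → IsProbabilityMeasure (μ.map π) :=
    fun μ hμ => Measure.isProbabilityMeasure_map hm.aemeasurable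
  refine ⟨hiso, ?_, ?_, ?_⟩
  · intro ρ hρ
    obtain ⟨μ, hμ, hμρ⟩ := hlift ρ hρ
    refine ⟨μ, ⟨hμ, hμρ⟩, ?_⟩
    rintro ν ⟨hν, hνρ⟩
    haveI := hμ.1
    haveI := hν.1
    refine ext_of_forall_integral_eq_of_IsFiniteMeasure fun f => ?_
    have h1 := hDint f.toContinuousMap μ hμ.1 hμ.2
    have h2 := hDint f.toContinuousMap ν hν.1 hν.2
    rw [hμρ] at h1
    rw [hνρ] at h2
    exact h2.symm.trans h1
  · intro μ ν t
    rw [Measure.map_add _ _ hm, Measure.map_smul, Measure.map_smul]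
  · have hub : ∀ r ∈ {r : ℝ | ∃ μ ν : Measure X, IsProbabilityMeasure μ ∧
        IsProbabilityMeasure ν ∧ (∀ Φ : X ≃ᵢ X, μ.map Φ = μ) ∧ (∀ Φ : X ≃ᵢ X, ν.map Φ = ν) ∧
        r = kantorovichDist μ ν}, r ≤ Metric.diam (Set.univ : Set Q) := by
      rintro r ⟨μ, ν, hμ, hν, hμi, hνi, rfl⟩
      rw [← hiso μ ν hμ hν hμi hνi]
      exact hbound _ _ (hprob μ hμ) (hprob ν hν)
    apply le_antisymm
    · exact Real.sSup_le hub Metric.diam_nonneg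
    · have hle : ∀ p q : Q, dist p q ≤ sSup {r : ℝ | ∃ μ ν : Measure X, IsProbabilityMeasure μ ∧
        IsProbabilityMeasure ν ∧ (∀ Φ : X ≃ᵢ X, μ.map Φ = μ) ∧ (∀ Φ : X ≃ᵢ X, ν.map Φ = ν) ∧
        r = kantorovichDist μ ν} := by
        intro p q
        obtain ⟨μ, ⟨hμ, hμi⟩, hμρ⟩ := hlift (Measure.dirac p) inferInstance
        obtain ⟨ν, ⟨hν, hνi⟩, hνρ⟩ := hlift (Measure.dirac q) inferInstance
        refine le_trans ?_ (le_csSup ⟨_, hub⟩ ⟨μ, ν, hμ, hν, hμi, hνi, rfl⟩)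
        rw [← hiso μ ν hμ hν hμi hνi, hμρ, hνρ]
        refine le_csSup ⟨Metric.diam (Set.univ : Set Q), ?_⟩ ⟨fun z => dist z q, ?_, ?_⟩
        · rintro r ⟨f, hf, rfl⟩
          exact integral_diff_le_diam _ _ f hf
        · exact LipschitzWith.dist_left q
        · simp
      refine Metric.diam_le_of_forall_dist_le ?_ fun p _ q _ => hle p q
      obtain ⟨p⟩ : Nonempty Q := inferInstance
      exact dist_nonneg.trans (hle p p)
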